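/- Let (σ₁^α, σ₂^α) satisfy the cut-off conditions with constant E₀ > 0 and let g^α be the associated density kernel. Then for each fixed r ≥ 0 the map φ ↦ g^α(r,φ) is differentiable, the partial derivative ∂_φ g^α is continuous on [0,∞)×ℝ, and it obeys the bound |∂_φ g^α(r,φ)| ≤ (2π e/m_α)(E₀ + e|φ|) ‖(σ₁^α)'‖_{L^∞(ℝ)} ‖σ₂^α‖_{L^∞(ℝ)} for all r ≥ 0 and φ ∈ ℝ. -/

import Mathlib

/-!
Write `a = α e φ` and `H r s = ∫₀^{2π} σ₂(½ r² + α (c m / (e β)) r √(2 s / m) sin θ) dθ`. The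
integrand of the kernel has a square-root singularity at the lower endpoint `E = a`, and the
substitution `s = E - a` moves the whole dependence on `φ` into `σ₁`:
`g(r, φ) = (1/m) ∫₀^{(E₀ - a)⁺} σ₁(s + a) H r s ds`.
Since `σ₁` vanishes on `[E₀, ∞)`, the upper endpoint may be replaced by any `M ≥ (E₀ - a)⁺`
(`integral_cutoff`), hence by one that is locally constant in `φ`, and differentiating under the
integral sign (`hasDerivAt_integral_shift`) gives
`∂_φ g(r, φ) = (α e / m) ∫₀^{(E₀ - a)⁺} σ₁'(s + a) H r s ds`.
Here `σ₁'` vanishes on the closed half-line `[E₀, ∞)`, because the nonnegative function `σ₁` has a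
minimum at each of its points. Joint continuity follows from that of `H`, and the bound from
`|H| ≤ 2π ‖σ₂‖_∞` and `(E₀ - a)⁺ ≤ E₀ + e |φ|`.
-/


open Real MeasureTheory Set Filter

noncomputable section

/-- The density kernel
`g^α(r,φ) = (1/m_α) ∫_{αeφ}^{E₀} σ₁(E) ∫₀^{2π} σ₂(½r² + α(c m_α/(eβ)) r √(2(E−αeφ)/m_α) sin θ) dθ dE`
for `r ≥ 0` and `αeφ < E₀`, and `g^α(r,φ) = 0` otherwise. -/
def gker (e c β E₀ α mα : ℝ) (σ₁ σ₂ : ℝ → ℝ) (r φv : ℝ) : ℝ :=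
  if 0 ≤ r ∧ α * e * φv < E₀ then
    (1 / mα) * ∫ E in (α * e * φv)..E₀, σ₁ E *
      ∫ θ in (0:ℝ)..(2 * π),
        σ₂ ((1/2) * r ^ 2
          + α * (c * mα / (e * β)) * r * Real.sqrt (2 * (E - α * e * φv) / mα) * Real.sin θ)
  else 0

/-- The angular average `∫₀^{2π} σ₂(½ r² + k r √(2 s / m) sin θ) dθ`, as a function of `r` and the
shifted energy `s = E - αeφ`. For `s < 0` the square root is `0`, which makes it continuous on all
of `ℝ × ℝ`. -/
def angInt (k m : ℝ) (σ₂ : ℝ → ℝ) (r s : ℝ) : ℝ :=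
  ∫ θ in (0:ℝ)..(2 * π), σ₂ ((1/2) * r ^ 2 + k * r * Real.sqrt (2 * s / m) * Real.sin θ)

lemma continuous_angInt (k m : ℝ) {σ₂ : ℝ → ℝ} (h : Continuous σ₂) :
    Continuous (fun p : ℝ × ℝ => angInt k m σ₂ p.1 p.2) := by
  unfold angInt
  refine intervalIntegral.continuous_parametric_intervalIntegral_of_continuous' ?_ _ _
  fun_prop

lemma abs_angInt_le (k m : ℝ) {σ₂ : ℝ → ℝ} {C : ℝ} (h0 : ∀ p, 0 ≤ σ₂ p) (hC : ∀ p, σ₂ p ≤ C)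
    (r s : ℝ) : |angInt k m σ₂ r s| ≤ C * (2 * π) := by
  have := intervalIntegral.norm_integral_le_of_norm_le_const (a := 0) (b := 2 * π) (C := C)
    (f := fun θ => σ₂ ((1/2) * r ^ 2 + k * r * Real.sqrt (2 * s / m) * Real.sin θ))
    (fun θ _ => by rw [Real.norm_eq_abs, abs_of_nonneg (h0 _)]; exact hC _)
  rwa [sub_zero, abs_of_pos Real.two_pi_pos, Real.norm_eq_abs] at this

lemma integral_cutoff {F H : ℝ → ℝ} (hF : Continuous F) (hH : Continuous H) {E₀ a M : ℝ}
    (hv : ∀ η, E₀ ≤ η → F η = 0) (hM : max (E₀ - a) 0 ≤ M) :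
    ∫ s in (0:ℝ)..M, F (s + a) * H s = ∫ s in (0:ℝ)..(max (E₀ - a) 0), F (s + a) * H s := by
  have hc : Continuous fun s => F (s + a) * H s := by fun_prop
  rw [← intervalIntegral.integral_add_adjacent_intervals
    (hc.intervalIntegrable 0 (max (E₀ - a) 0)) (hc.intervalIntegrable _ M), add_eq_left]
  refine intervalIntegral.integral_zero_ae (Eventually.of_forall fun s hs => ?_)
  rw [uIoc_of_le hM] at hs
  have h1 : E₀ - a < s := (le_max_left _ _).trans_lt hs.1
  rw [hv _ (by linarith), zero_mul]

lemma hasDerivAt_integral_shift {f H : ℝ → ℝ} (hf : ContDiff ℝ 1 f) (hH : Continuous H) {C : ℝ}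
    (hC : ∀ η, |deriv f η| ≤ C) (M a₀ : ℝ) :
    HasDerivAt (fun a => ∫ s in (0:ℝ)..M, f (s + a) * H s)
      (∫ s in (0:ℝ)..M, deriv f (s + a₀) * H s) a₀ := by
  have hf0 : Continuous f := hf.continuous
  have hf1 : Continuous (deriv f) := hf.continuous_deriv le_rfl
  refine (intervalIntegral.hasDerivAt_integral_of_dominated_loc_of_deriv_le
    (F := fun a s => f (s + a) * H s) (F' := fun a s => deriv f (s + a) * H s)
    (bound := fun s => C * |H s|) (s := univ) univ_mem ?_ ?_ ?_ ?_ ?_ ?_).2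
  · exact Eventually.of_forall fun a =>
      Continuous.aestronglyMeasurable (by fun_prop)
  · exact Continuous.intervalIntegrable (by fun_prop) _ _
  · exact Continuous.aestronglyMeasurable (by fun_prop)
  · refine Eventually.of_forall fun s _ a _ => ?_
    rw [norm_mul, Real.norm_eq_abs, Real.norm_eq_abs]
    exact mul_le_mul_of_nonneg_right (hC _) (abs_nonneg _)
  · exact Continuous.intervalIntegrable (by fun_prop) _ _
  · refine Eventually.of_forall fun s _ a _ => ?_
    have h := (hf.differentiable one_ne_zero (s + a)).hasDerivAt
    exact (h.comp_const_add s a).mul_const _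

/-- The kernel after the substitution `s = E - αeφ`; both sides vanish when `αeφ ≥ E₀`. -/
lemma gker_eq (e c β E₀ α mα : ℝ) {σ₁ σ₂ : ℝ → ℝ} {r φv : ℝ} (hr : 0 ≤ r) :
    gker e c β E₀ α mα σ₁ σ₂ r φv = (1 / mα) * ∫ s in (0:ℝ)..(max (E₀ - α * e * φv) 0),
      σ₁ (s + α * e * φv) * angInt (α * (c * mα / (e * β))) mα σ₂ r s := by
  unfold gker
  split_ifs with h
  · rw [max_eq_left (by linarith [h.2])]
    have := intervalIntegral.integral_comp_add_right (a := 0) (b := E₀ - α * e * φv)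
      (fun E => σ₁ E * angInt (α * (c * mα / (e * β))) mα σ₂ r (E - α * e * φv)) (α * e * φv)
    simp only [add_sub_cancel_right, zero_add, sub_add_cancel] at this
    rw [this]
    rfl
  · rw [max_eq_right (by by_contra! h'; exact h ⟨hr, by linarith⟩)]
    simp

/-- for each `r ≥ 0` the map `φ ↦ g^α(r,φ)` is differentiable, the partial
derivative `∂_φ g^α` is continuous on `[0,∞) × ℝ` and satisfies
`|∂_φ g^α(r,φ)| ≤ (2πe/m_α)(E₀ + e|φ|) ‖(σ₁^α)'‖_{L∞} ‖σ₂^α‖_{L∞}`, the `L∞`-norms being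
expressed via arbitrary uniform bounds `C₁'` on `|(σ₁^α)'|` and `C₂` on `σ₂^α`. -/
theorem stmt12
    (e c β mminus mplus E₀ : ℝ) (he : 0 < e) (hc : 0 < c) (hβ : 0 < β)
    (hmm : 0 < mminus) (hmp : 0 < mplus) (hE₀ : 0 < E₀)
    (α : ℝ) (hα : α = -1 ∨ α = 1)
    (mα : ℝ) (hmα : mα = if α = 1 then mplus else mminus)
    (σ₁ σ₂ : ℝ → ℝ)
    (hσ₁C1 : ContDiff ℝ 1 σ₁)
    (hσ₁b : ∃ C : ℝ, ∀ η : ℝ, |σ₁ η| ≤ C ∧ |deriv σ₁ η| ≤ C)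
    (hσ₁pos : ∀ η : ℝ, 0 ≤ σ₁ η)
    (hσ₁int : MeasureTheory.Integrable σ₁)
    (hσ₁van : ∀ η : ℝ, E₀ ≤ η → σ₁ η = 0)
    (hσ₂C1 : ContDiff ℝ 1 σ₂)
    (hσ₂b : ∃ C : ℝ, ∀ p : ℝ, |σ₂ p| ≤ C ∧ |deriv σ₂ p| ≤ C)
    (hσ₂pos : ∀ p : ℝ, 0 ≤ σ₂ p)
    (hσ₂van : ∀ p : ℝ, 0 ≤ p → σ₂ p = 0) :
    ∃ D : ℝ → ℝ → ℝ,
      (∀ r : ℝ, 0 ≤ r → ∀ φv : ℝ,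
        HasDerivAt (fun ψ => gker e c β E₀ α mα σ₁ σ₂ r ψ) (D r φv) φv) ∧
      ContinuousOn (fun q : ℝ × ℝ => D q.1 q.2) (Set.Ici 0 ×ˢ Set.univ) ∧
      (∀ r : ℝ, 0 ≤ r → ∀ φv : ℝ, ∀ C₁' C₂ : ℝ,
        (∀ η : ℝ, |deriv σ₁ η| ≤ C₁') → (∀ p : ℝ, σ₂ p ≤ C₂) →
        |D r φv| ≤ (2 * π * e / mα) * (E₀ + e * |φv|) * C₁' * C₂) := by
  have hm : 0 < mα := by rw [hmα]; split_ifs <;> assumption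
  have habs : |α| = 1 := by rcases hα with rfl | rfl <;> simp
  obtain ⟨C, hC⟩ := hσ₁b
  have hd1 : Continuous (deriv σ₁) := hσ₁C1.continuous_deriv le_rfl
  have hdvan : ∀ η, E₀ ≤ η → deriv σ₁ η = 0 := fun η hη =>
    IsLocalMin.deriv_eq_zero (Eventually.of_forall fun x => by
      rw [hσ₁van η hη]; exact hσ₁pos x)
  set k := α * (c * mα / (e * β)) with hk
  have hHc : Continuous (fun p : ℝ × ℝ => angInt k mα σ₂ p.1 p.2) :=
    continuous_angInt k mα hσ₂C1.continuous
  have hHr : ∀ r, Continuous (angInt k mα σ₂ r) := fun r =>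
    hHc.comp (by fun_prop : Continuous fun s : ℝ => (r, s))
  refine ⟨fun r φv => (α * e / mα) * ∫ s in (0:ℝ)..(max (E₀ - α * e * φv) 0),
    deriv σ₁ (s + α * e * φv) * angInt k mα σ₂ r s, ?_, ?_, ?_⟩
  · intro r hr φv
    -- The margin `1` lets the fixed endpoint `M` serve all `ψ` near `φv`.
    set M := max (E₀ - α * e * φv) 0 + 1 with hM
    have hd := hasDerivAt_integral_shift hσ₁C1 (hHr r) (fun η => (hC η).2) M (α * e * φv)
    have hlin : HasDerivAt (fun ψ : ℝ => α * e * ψ) (α * e) φv := by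
      simpa using (hasDerivAt_id φv).const_mul (α * e)
    have hcomp := (hd.comp φv hlin).const_mul (1 / mα)
    rw [integral_cutoff hd1 (hHr r) hdvan (by linarith)] at hcomp
    have hval : ∀ I : ℝ, 1 / mα * (I * (α * e)) = α * e / mα * I := fun I => by ring
    rw [hval] at hcomp
    refine hcomp.congr_of_eventuallyEq ?_
    have hcont : Continuous fun ψ : ℝ => max (E₀ - α * e * ψ) 0 := by fun_prop
    filter_upwards [hcont.continuousAt.eventually_lt continuousAt_const
      (show max (E₀ - α * e * φv) 0 < M by linarith)] with ψ hψ
    rw [gker_eq e c β E₀ α mα hr, ← hk,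
      ← integral_cutoff hσ₁C1.continuous (hHr r) hσ₁van hψ.le]
    rfl
  · refine Continuous.continuousOn (continuous_const.mul ?_)
    refine intervalIntegral.continuous_parametric_intervalIntegral_of_continuous
      (f := fun (q : ℝ × ℝ) s => deriv σ₁ (s + α * e * q.2) * angInt k mα σ₂ q.1 s)
      (s := fun q : ℝ × ℝ => max (E₀ - α * e * q.2) 0) ?_ (by fun_prop)
    have h2 : Continuous fun p : (ℝ × ℝ) × ℝ => angInt k mα σ₂ p.1.1 p.2 :=
      hHc.comp (by fun_prop : Continuous fun p : (ℝ × ℝ) × ℝ => (p.1.1, p.2))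
    have h1 : Continuous fun p : (ℝ × ℝ) × ℝ => deriv σ₁ (p.2 + α * e * p.1.2) := by fun_prop
    exact h1.mul h2
  · intro r hr φv C₁' C₂ h1 h2
    have hC1 : 0 ≤ C₁' := (abs_nonneg _).trans (h1 0)
    have hC2 : 0 ≤ C₂ := (hσ₂pos 0).trans (h2 0)
    have hI := intervalIntegral.norm_integral_le_of_norm_le_const
      (a := 0) (b := max (E₀ - α * e * φv) 0) (C := C₁' * (C₂ * (2 * π)))
      (f := fun s => deriv σ₁ (s + α * e * φv) * angInt k mα σ₂ r s) (fun s _ => by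
        rw [norm_mul, Real.norm_eq_abs, Real.norm_eq_abs]
        exact mul_le_mul (h1 _) (abs_angInt_le k mα hσ₂pos h2 r s) (abs_nonneg _) hC1)
    rw [sub_zero, abs_of_nonneg (le_max_right _ _), Real.norm_eq_abs] at hI
    have hlen : max (E₀ - α * e * φv) 0 ≤ E₀ + e * |φv| := by
      have h3 : |α * e * φv| = e * |φv| := by
        rw [abs_mul, abs_mul, habs, abs_of_pos he, one_mul]
      have h4 := neg_abs_le (α * e * φv)
      exact max_le (by linarith) (by positivity)
    have hpre : |α * e / mα| = e / mα := by
      rw [abs_div, abs_mul, habs, abs_of_pos he, abs_of_pos hm, one_mul]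
    dsimp only
    rw [abs_mul, hpre]
    calc _ ≤ e / mα * (C₁' * (C₂ * (2 * π)) * (E₀ + e * |φv|)) := by gcongr; exact hI.trans (by gcongr)
      _ = _ := by ring
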